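/- arXiv:1108.5930 — 3 statements merged into one kernel-verified Lean document; each statement's English description precedes it below -/
import Mathlib

section
/- Let L be a linear pencil in n variables. Then the spectrahedron S_L is empty if and only if −1 belongs to the quadratic module M_L associated to L. -/
open MvPolynomial Matrix

/-- The linear pencil `L = A 0 + X 1 * A 1 + ... + X n * A n` as a symmetric matrix
with entries in the polynomial ring `ℝ[X 1, ..., X n]`. -/
noncomputable def pencilPoly {n m : ℕ} (A : Fin (n+1) → Matrix (Fin m) (Fin m) ℝ) :
    Matrix (Fin m) (Fin m) (MvPolynomial (Fin n) ℝ) :=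
  fun a b => MvPolynomial.C (A 0 a b) + ∑ i : Fin n, MvPolynomial.X i * MvPolynomial.C (A i.succ a b)

/-- Evaluation of the pencil at a point `x ∈ ℝⁿ`. -/
def pencilEval {n m : ℕ} (A : Fin (n+1) → Matrix (Fin m) (Fin m) ℝ) (x : Fin n → ℝ) :
    Matrix (Fin m) (Fin m) ℝ :=
  A 0 + ∑ i : Fin n, x i • A i.succ

/-- The spectrahedron `S_L = {x ∈ ℝⁿ ∣ L(x) ⪰ 0}`. -/
def specSet {n m : ℕ} (A : Fin (n+1) → Matrix (Fin m) (Fin m) ℝ) : Set (Fin n → ℝ) :=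
  {x | (pencilEval A x).PosSemidef}

/-- `vᵀ L v` for a vector `v` of polynomials. -/
noncomputable def vLv {n m : ℕ} (A : Fin (n+1) → Matrix (Fin m) (Fin m) ℝ)
    (v : Fin m → MvPolynomial (Fin n) ℝ) : MvPolynomial (Fin n) ℝ :=
  ∑ a : Fin m, ∑ b : Fin m, v a * pencilPoly A a b * v b

/-- Membership in the quadratic module `M_L` associated to the pencil `L`:
`p = s + Σⱼ vⱼᵀ L vⱼ` with `s` a sum of squares. -/
def memQM {n m : ℕ} (A : Fin (n+1) → Matrix (Fin m) (Fin m) ℝ)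
    (p : MvPolynomial (Fin n) ℝ) : Prop :=
  ∃ (k r : ℕ) (q : Fin k → MvPolynomial (Fin n) ℝ)
    (v : Fin r → Fin m → MvPolynomial (Fin n) ℝ),
    p = ∑ i, (q i)^2 + ∑ j, vLv A (v j)

/-- In finite dimension, the convex hull of a compact set is compact. -/
theorem IsCompact.isCompact_convexHull_of_finiteDimensional {E : Type*} [AddCommGroup E]
    [Module ℝ E] [TopologicalSpace E] [IsTopologicalAddGroup E] [ContinuousSMul ℝ E]
    [FiniteDimensional ℝ E] {s : Set E} (hs : IsCompact s) : IsCompact (convexHull ℝ s) := by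
  rcases s.eq_empty_or_nonempty with rfl | ⟨s₀, hs₀⟩
  · simp
  set d := Module.finrank ℝ E + 1
  have hcompact : IsCompact ((fun p : (Fin d → ℝ) × (Fin d → E) => ∑ i, p.1 i • p.2 i) ''
      (stdSimplex ℝ (Fin d) ×ˢ Set.univ.pi fun _ => s)) :=
    ((isCompact_stdSimplex ℝ (Fin d)).prod (isCompact_univ_pi fun _ => hs)).image (by fun_prop)
  convert hcompact
  refine Set.Subset.antisymm (fun x hx => ?_) ?_
  · obtain ⟨ι, _, z, w, hz, hind, hw, hw1, rfl⟩ := eq_pos_convex_span_of_mem_convexHull hx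
    have hcard : Fintype.card ι ≤ Fintype.card (Fin d) := by
      simpa [d] using hind.card_le_finrank_succ.trans
        (Nat.succ_le_succ (Submodule.finrank_le _))
    obtain ⟨e⟩ := Function.Embedding.nonempty_of_card_le hcard
    have hout : ∀ j ∉ Set.range e, Function.extend e w 0 j = 0 := fun j hj =>
      Function.extend_apply' _ _ _ hj
    refine ⟨(Function.extend e w 0, Function.extend e z fun _ => s₀), ⟨⟨fun j => ?_, ?_⟩, ?_⟩, ?_⟩
    · by_cases hj : j ∈ Set.range e
      · obtain ⟨i, rfl⟩ := hj
        simpa [e.injective.extend_apply] using (hw i).le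
      · exact (hout j hj).ge
    · rw [← hw1]
      exact (Fintype.sum_of_injective e e.injective _ _ hout
        fun i => (e.injective.extend_apply _ _ i).symm).symm
    · intro j _
      by_cases hj : j ∈ Set.range e
      · obtain ⟨i, rfl⟩ := hj
        simpa [e.injective.extend_apply] using hz ⟨i, rfl⟩
      · simpa [Function.extend_apply' _ _ _ hj] using hs₀
    · refine (Fintype.sum_of_injective e e.injective _ _ (fun j hj => ?_) fun i => ?_).symm
      · simp [hout j hj]
      · simp [e.injective.extend_apply]
  · rintro _ ⟨⟨w, z⟩, ⟨⟨hw, hw1⟩, hz⟩, rfl⟩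
    exact (convex_convexHull ℝ s).sum_mem (fun i _ => hw i) hw1
      fun i _ => subset_convexHull ℝ s (hz i trivial)

/-- Quadratic modules of a commutative ring. -/
structure IsQuadraticModule {R : Type*} [CommRing R] (N : Set R) : Prop where
  one_mem : 1 ∈ N
  add_mem : ∀ {a b}, a ∈ N → b ∈ N → a + b ∈ N
  sq_mul_mem : ∀ (f : R) {a}, a ∈ N → f ^ 2 * a ∈ N

namespace IsQuadraticModule

variable {R : Type*} [CommRing R] {N : Set R}

theorem zero_mem (hN : IsQuadraticModule N) : (0 : R) ∈ N := by
  simpa using hN.sq_mul_mem 0 hN.one_mem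

theorem sq_mem (hN : IsQuadraticModule N) (f : R) : f ^ 2 ∈ N := by
  simpa using hN.sq_mul_mem f hN.one_mem

/-- Every proper quadratic module is contained in a maximal proper one. -/
theorem exists_maximal {M : Set R} (hM : IsQuadraticModule M) (hneg : (-1 : R) ∉ M) :
    ∃ N, M ⊆ N ∧ Maximal (fun N : Set R => IsQuadraticModule N ∧ (-1 : R) ∉ N) N := by
  refine zorn_subset_nonempty {N : Set R | IsQuadraticModule N ∧ (-1 : R) ∉ N} ?_ M ⟨hM, hneg⟩
  rintro c hc hchain ⟨N₀, hN₀⟩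
  refine ⟨⋃₀ c, ⟨⟨⟨N₀, hN₀, (hc hN₀).1.one_mem⟩, ?_, ?_⟩, ?_⟩, fun s => Set.subset_sUnion_of_mem⟩
  · rintro a b ⟨s, hs, ha⟩ ⟨t, ht, hb⟩
    rcases hchain.total hs ht with hst | hts
    · exact ⟨t, ht, (hc ht).1.add_mem (hst ha) hb⟩
    · exact ⟨s, hs, (hc hs).1.add_mem ha (hts hb)⟩
  · rintro f a ⟨s, hs, ha⟩
    exact ⟨s, hs, (hc hs).1.sq_mul_mem f ha⟩
  · rintro ⟨s, hs, h⟩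
    exact (hc hs).2 h

variable [Algebra ℝ R]

theorem smul_mem (hN : IsQuadraticModule N) {c : ℝ} (hc : 0 ≤ c) {a : R} (ha : a ∈ N) :
    c • a ∈ N := by
  have h := hN.sq_mul_mem (algebraMap ℝ R (√c)) ha
  rwa [← map_pow, Real.sq_sqrt hc, ← Algebra.smul_def] at h

/-- The support `N ∩ -N` of a quadratic module, which is an ideal. -/
def support (hN : IsQuadraticModule N) : Ideal R where
  carrier := {f | f ∈ N ∧ -f ∈ N}
  zero_mem' := by simpa using hN.zero_mem
  add_mem' {a b} ha hb := ⟨hN.add_mem ha.1 hb.1, by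
    rw [neg_add]; exact hN.add_mem ha.2 hb.2⟩
  smul_mem' f a ha := by
    have hdiff : ∀ b : R, b ∈ N → -b ∈ N → f * b ∈ N := fun b hb hb' => by
      have h := hN.smul_mem (c := 1 / 4) (by norm_num)
        (hN.add_mem (hN.sq_mul_mem (f + 1) hb) (hN.sq_mul_mem (f - 1) hb'))
      have heq : (f + 1) ^ 2 * b + (f - 1) ^ 2 * -b = (4 : ℝ) • (f * b) := by
        rw [Algebra.smul_def, map_ofNat]; ring
      rwa [heq, smul_smul, show (1 / 4 * 4 : ℝ) = 1 by norm_num, one_smul] at h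
    refine ⟨hdiff a ha.1 ha.2, ?_⟩
    rw [smul_eq_mul, ← mul_neg]
    exact hdiff (-a) ha.2 (by rw [neg_neg]; exact ha.1)

theorem mem_of_add_mem_of_mem_support (hN : IsQuadraticModule N) {a b : R} (h : a + b ∈ N)
    (hb : b ∈ hN.support) : a ∈ N := by
  simpa using hN.add_mem h hb.2

/-- If a sum of two elements of `N` lies in the support, so does each summand. -/
theorem mem_support_of_add_mem_support (hN : IsQuadraticModule N) {a b : R} (ha : a ∈ N)
    (hb : b ∈ N) (hab : a + b ∈ hN.support) : a ∈ hN.support := by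
  refine ⟨ha, ?_⟩
  have h := hN.add_mem hb hab.2
  rwa [show b + -(a + b) = -a by ring] at h

theorem smul_mem_support_iff (hN : IsQuadraticModule N) {c : ℝ} (hc : c ≠ 0) {a : R} :
    c • a ∈ hN.support ↔ a ∈ hN.support := by
  refine ⟨fun h => ?_, fun h => Submodule.smul_of_tower_mem _ c h⟩
  simpa [smul_smul, hc] using Submodule.smul_of_tower_mem _ c⁻¹ h

/-- The support of a maximal proper quadratic module is closed under square roots. -/
theorem mem_support_of_sq_mem_support
    (hmax : Maximal (fun N : Set R => IsQuadraticModule N ∧ (-1 : R) ∉ N) N) {f : R}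
    (hf : f ^ 2 ∈ hmax.prop.1.support) : f ∈ hmax.prop.1.support := by
  have hN := hmax.prop.1
  let N' : Set R := {g | ∃ a ∈ N, ∃ h, g = a + f * h}
  have hsub : N ⊆ N' := fun a ha => ⟨a, ha, 0, by ring⟩
  have hN' : IsQuadraticModule N' := by
    refine ⟨hsub hN.one_mem, ?_, ?_⟩
    · rintro _ _ ⟨a, ha, h, rfl⟩ ⟨b, hb, k, rfl⟩
      exact ⟨a + b, hN.add_mem ha hb, h + k, by ring⟩
    · rintro g _ ⟨a, ha, h, rfl⟩
      exact ⟨g ^ 2 * a, hN.sq_mul_mem g ha, g ^ 2 * h, by ring⟩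
  have hneg : (-1 : R) ∉ N' := by
    rintro ⟨a, ha, h, heq⟩
    refine hmax.prop.2 ?_
    have hsq : (2 * (f * h) + 1) + h ^ 2 * f ^ 2 ∈ N := by
      have := hN.sq_mem (1 + f * h)
      rwa [show (1 + f * h) ^ 2 = (2 * (f * h) + 1) + h ^ 2 * f ^ 2 by ring] at this
    have hlin := hN.mem_of_add_mem_of_mem_support hsq (Ideal.mul_mem_left _ _ hf)
    have := hN.add_mem (hN.add_mem ha ha) hlin
    rwa [show a + a + (2 * (f * h) + 1) = -1 by linear_combination -2 * heq] at this
  have hle : N' ⊆ N := hmax.le_of_ge ⟨hN', hneg⟩ hsub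
  exact ⟨hle ⟨0, hN.zero_mem, 1, by ring⟩, hle ⟨0, hN.zero_mem, -1, by ring⟩⟩

end IsQuadraticModule

section Pencil

variable {n m : ℕ} (A : Fin (n + 1) → Matrix (Fin m) (Fin m) ℝ)

variable {A} in
theorem memQM.add {p p' : MvPolynomial (Fin n) ℝ} (hp : memQM A p) (hp' : memQM A p') :
    memQM A (p + p') := by
  obtain ⟨k, r, q, v, rfl⟩ := hp
  obtain ⟨k', r', q', v', rfl⟩ := hp'
  refine ⟨k + k', r + r', Fin.append q q', Fin.append v v', ?_⟩
  simp only [Fin.sum_univ_add, Fin.append_left, Fin.append_right]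
  exact add_add_add_comm _ _ _ _

theorem vLv_mul (f : MvPolynomial (Fin n) ℝ) (v : Fin m → MvPolynomial (Fin n) ℝ) :
    vLv A (fun a => f * v a) = f ^ 2 * vLv A v := by
  simp only [vLv, Finset.mul_sum]
  exact Finset.sum_congr rfl fun a _ => Finset.sum_congr rfl fun b _ => by ring

variable {A} in
theorem memQM.sq_mul (f : MvPolynomial (Fin n) ℝ) {p : MvPolynomial (Fin n) ℝ}
    (hp : memQM A p) : memQM A (f ^ 2 * p) := by
  obtain ⟨k, r, q, v, rfl⟩ := hp
  refine ⟨k, r, fun i => f * q i, fun j a => f * v j a, ?_⟩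
  simp only [mul_add, Finset.mul_sum, mul_pow, vLv_mul]

theorem memQM_one : memQM A 1 :=
  ⟨1, 0, fun _ => 1, Fin.elim0, by simp⟩

/-- The quadratic module of a pencil is a quadratic module. -/
theorem isQuadraticModule_memQM : IsQuadraticModule {p | memQM A p} where
  one_mem := memQM_one A
  add_mem := memQM.add
  sq_mul_mem := memQM.sq_mul

theorem memQM_vLv (v : Fin m → MvPolynomial (Fin n) ℝ) : memQM A (vLv A v) :=
  ⟨0, 1, Fin.elim0, fun _ => v, by simp⟩

theorem eval_pencilPoly (x : Fin n → ℝ) (a b : Fin m) :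
    eval x (pencilPoly A a b) = pencilEval A x a b := by
  simp [pencilPoly, pencilEval, Matrix.sum_apply]

theorem eval_vLv (x : Fin n → ℝ) (v : Fin m → MvPolynomial (Fin n) ℝ) :
    eval x (vLv A v) =
      (fun a => eval x (v a)) ⬝ᵥ (pencilEval A x *ᵥ fun a => eval x (v a)) := by
  simp [vLv, eval_pencilPoly, dotProduct, mulVec, Finset.mul_sum, mul_assoc]

/-- The coefficient vector of the affine polynomial `uᵀ L w`. -/
def pencilCoeff (u w : Fin m → ℝ) : Fin (n + 1) → ℝ := fun i => u ⬝ᵥ (A i *ᵥ w)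

/-- The affine polynomial with given coefficient vector. -/
noncomputable def affinePoly : (Fin (n + 1) → ℝ) →ₗ[ℝ] MvPolynomial (Fin n) ℝ where
  toFun e := C (e 0) + ∑ i : Fin n, X i * C (e i.succ)
  map_add' e e' := by
    simp only [Pi.add_apply, map_add, mul_add, Finset.sum_add_distrib]
    ring
  map_smul' c e := by
    simp only [Pi.smul_apply, smul_eq_mul, map_mul, RingHom.id_apply, smul_eq_C_mul, mul_add,
      Finset.mul_sum]
    congr 1
    exact Finset.sum_congr rfl fun i _ => by ring

theorem affinePoly_pencilCoeff (u w : Fin m → ℝ) :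
    affinePoly (pencilCoeff A u w) = ∑ a, ∑ b, C (u a) * pencilPoly A a b * C (w b) := by
  simp only [affinePoly, pencilCoeff, LinearMap.coe_mk, AddHom.coe_mk, pencilPoly, dotProduct,
    mulVec, map_sum, map_mul, mul_add, add_mul, Finset.sum_add_distrib, Finset.mul_sum,
    Finset.sum_mul]
  congr 1
  · exact Finset.sum_congr rfl fun a _ => Finset.sum_congr rfl fun b _ => by ring
  · rw [Finset.sum_comm]
    refine Finset.sum_congr rfl fun a _ => ?_
    rw [Finset.sum_comm]
    exact Finset.sum_congr rfl fun b _ => Finset.sum_congr rfl fun i _ => by ring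

variable {A}

theorem pencilCoeff_comm (hsymm : ∀ i, (A i).IsSymm) (u w : Fin m → ℝ) :
    pencilCoeff A u w = pencilCoeff A w u := by
  ext i
  simp only [pencilCoeff]
  rw [dotProduct_mulVec, dotProduct_comm, ← mulVec_transpose, (hsymm i).eq]

theorem vLv_combination (hsymm : ∀ i, (A i).IsSymm) (p q : MvPolynomial (Fin n) ℝ)
    (u w : Fin m → ℝ) :
    vLv A (fun a => p * C (u a) + q * C (w a)) =
      p ^ 2 * affinePoly (pencilCoeff A u u) + 2 * p * q * affinePoly (pencilCoeff A u w) +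
        q ^ 2 * affinePoly (pencilCoeff A w w) := by
  have hcomm : 2 * p * q * affinePoly (pencilCoeff A u w) =
      p * q * affinePoly (pencilCoeff A u w) + p * q * affinePoly (pencilCoeff A w u) := by
    rw [pencilCoeff_comm hsymm w u]; ring
  rw [hcomm]
  simp only [affinePoly_pencilCoeff, vLv, Finset.mul_sum, ← Finset.sum_add_distrib]
  exact Finset.sum_congr rfl fun a _ => Finset.sum_congr rfl fun b _ => by ring

/-- Isotropic vectors of the form `uᵀ L w` modulo the support of a maximal proper quadratic module
containing `M_L` lie in its radical. -/
theorem affinePoly_pencilCoeff_mem_support (hsymm : ∀ i, (A i).IsSymm)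
    {N : Set (MvPolynomial (Fin n) ℝ)}
    (hmax : Maximal (fun N : Set (MvPolynomial (Fin n) ℝ) => IsQuadraticModule N ∧ -1 ∉ N) N)
    (hsub : {p | memQM A p} ⊆ N) {u : Fin m → ℝ}
    (hu : affinePoly (pencilCoeff A u u) ∈ hmax.prop.1.support) (w : Fin m → ℝ) :
    affinePoly (pencilCoeff A u w) ∈ hmax.prop.1.support := by
  have hN := hmax.prop.1
  apply IsQuadraticModule.mem_support_of_sq_mem_support hmax
  set ℓ := affinePoly (pencilCoeff A u w)
  have key : ∀ r : ℝ, C r * ℓ ^ 2 ∈ N := fun r => by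
    set p : MvPolynomial (Fin n) ℝ := C (1 / 2) * (C r - affinePoly (pencilCoeff A w w))
    have hmem := hsub (memQM_vLv A fun a => p * C (u a) + ℓ * C (w a))
    rw [vLv_combination hsymm] at hmem
    refine hN.mem_of_add_mem_of_mem_support ?_ (Ideal.mul_mem_left _ (p ^ 2) hu)
    convert hmem using 1
    have h2 : (2 : MvPolynomial (Fin n) ℝ) * C (1 / 2) = 1 := by
      rw [← map_ofNat C 2, ← map_mul]; norm_num
    linear_combination (-(C r - affinePoly (pencilCoeff A w w)) * ℓ ^ 2) * h2
  exact ⟨by simpa using key 1, by simpa using key (-1)⟩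

/-- The vectors `u` for which `uᵀ L w` lies in the ideal `I` for all `w`. -/
def pencilRadical (A : Fin (n + 1) → Matrix (Fin m) (Fin m) ℝ)
    (I : Ideal (MvPolynomial (Fin n) ℝ)) : Submodule ℝ (Fin m → ℝ) where
  carrier := {u | ∀ w, affinePoly (pencilCoeff A u w) ∈ I}
  zero_mem' w := by
    have : pencilCoeff A 0 w = 0 := by ext; simp [pencilCoeff]
    simp [this]
  add_mem' {u v} hu hv w := by
    have : pencilCoeff A (u + v) w = pencilCoeff A u w + pencilCoeff A v w := by
      ext; simp [pencilCoeff]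
    simpa [this] using I.add_mem (hu w) (hv w)
  smul_mem' c u hu w := by
    have : pencilCoeff A (c • u) w = c • pencilCoeff A u w := by
      ext; simp [pencilCoeff]
    rw [this, map_smul]
    exact Submodule.smul_of_tower_mem _ c (hu w)

/-- A linear form on coefficient vectors that is positive at `1` and nonnegative at every
`uᵀ L u` yields a point of the spectrahedron. -/
theorem specSet_nonempty_of_linearMap (hsymm : ∀ i, (A i).IsSymm)
    (φ : (Fin (n + 1) → ℝ) →ₗ[ℝ] ℝ) (h1 : 0 < φ (Pi.single 0 1))
    (hφ : ∀ u, 0 ≤ φ (pencilCoeff A u u)) : (specSet A).Nonempty := by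
  set y : Fin (n + 1) → ℝ := fun i => φ (Pi.single i 1)
  refine ⟨fun i => y i.succ / y 0, PosSemidef.of_dotProduct_mulVec_nonneg ?_ fun u => ?_⟩
  · rw [IsHermitian, conjTranspose_eq_transpose_of_trivial, pencilEval]
    simp [transpose_sum, (hsymm _).eq]
  · have hexp : φ (pencilCoeff A u u) = ∑ i, pencilCoeff A u u i * y i := by
      conv_lhs => rw [pi_eq_sum_univ' (pencilCoeff A u u)]
      simp [y, map_sum]
    have heq : star u ⬝ᵥ (pencilEval A (fun i => y i.succ / y 0) *ᵥ u) =
        φ (pencilCoeff A u u) / y 0 := by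
      rw [hexp, Fin.sum_univ_succ, star_trivial, pencilEval, add_mulVec, dotProduct_add,
        sum_mulVec, dotProduct_sum, add_div, Finset.sum_div]
      congr 1
      · simp [pencilCoeff, h1.ne', y]
      · refine Finset.sum_congr rfl fun i _ => ?_
        rw [smul_mulVec, dotProduct_smul, smul_eq_mul, pencilCoeff]
        ring
    rw [heq]
    exact div_nonneg (hφ u) h1.le

theorem specSet_nonempty_of_neg_one_notMem (hsymm : ∀ i, (A i).IsSymm) (h : ¬ memQM A (-1)) :
    (specSet A).Nonempty := by
  obtain ⟨N, hsub, hmax⟩ := (isQuadraticModule_memQM A).exists_maximal h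
  have hN := hmax.prop.1
  set I := hN.support
  have hform : ∀ u, affinePoly (pencilCoeff A u u) ∈ N := fun u => by
    have := hsub (memQM_vLv A fun a => C (u a))
    rwa [affinePoly_pencilCoeff]
  obtain ⟨K, hK⟩ := (pencilRadical A I).exists_isCompl
  let q : (Fin m → ℝ) → Fin (n + 1) → ℝ := fun u => pencilCoeff A u u
  let Γ : Set (Fin (n + 1) → ℝ) := insert (Pi.single 0 1) (q '' (Metric.sphere 0 1 ∩ K))
  have hq : Continuous q := by
    refine continuous_pi fun i => ?_
    simp only [q, pencilCoeff]
    fun_prop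
  have hΓ : IsCompact Γ :=
    (((isCompact_sphere _ _).inter_right K.closed_of_finiteDimensional).image hq).insert _
  let T : Set (Fin (n + 1) → ℝ) := {e | affinePoly e ∈ N ∧ affinePoly e ∉ I}
  have hT : Convex ℝ T := by
    rintro a ⟨ha, ha'⟩ b ⟨hb, hb'⟩ s t hs ht hst
    simp only [T, Set.mem_ofPred_eq, map_add, map_smul]
    refine ⟨hN.add_mem (hN.smul_mem hs ha) (hN.smul_mem ht hb), fun hmem => ?_⟩
    rcases hs.eq_or_lt with rfl | hs
    · exact hb' (by simpa [show t = 1 by linarith] using hmem)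
    · exact ha' ((hN.smul_mem_support_iff hs.ne').1 (hN.mem_support_of_add_mem_support
        (hN.smul_mem hs.le ha) (hN.smul_mem ht hb) hmem))
  have hΓT : Γ ⊆ T := by
    rintro _ (rfl | ⟨u, ⟨hu, huK⟩, rfl⟩)
    · have : affinePoly (Pi.single 0 1 : Fin (n + 1) → ℝ) = 1 := by simp [affinePoly]
      exact ⟨this ▸ hN.one_mem, fun h => hmax.prop.2 (this ▸ h).2⟩
    · refine ⟨hform u, fun hmem => ?_⟩
      have hrad : u ∈ pencilRadical A I :=
        affinePoly_pencilCoeff_mem_support hsymm hmax hsub hmem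
      have : u = 0 := by simpa using hK.disjoint.le_bot ⟨hrad, huK⟩
      simp [this] at hu
  let V : Submodule ℝ (Fin (n + 1) → ℝ) := (I.restrictScalars ℝ).comap affinePoly
  obtain ⟨f, c, d, hfc, hcd, hfd⟩ := geometric_hahn_banach_compact_closed (convex_convexHull ℝ Γ)
    hΓ.isCompact_convexHull_of_finiteDimensional V.convex V.closed_of_finiteDimensional
    (Set.disjoint_left.2 fun e he heV => (convexHull_min hΓT hT he).2 heV)
  have hd : d < 0 := by simpa using hfd 0 V.zero_mem
  have hpos : ∀ e ∈ Γ, 0 < -f e := fun e he => by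
    linarith [hfc e (subset_convexHull ℝ Γ he)]
  have hV : ∀ e ∈ V, f e = 0 := fun e he => by
    by_contra hne
    have := hfd ((d / f e) • e) (V.smul_mem _ he)
    simp [hne] at this
  refine specSet_nonempty_of_linearMap hsymm (-f.toLinearMap)
    (by simpa using hpos _ (Set.mem_insert _ _)) fun u => ?_
  obtain ⟨k, hk, w, hw, rfl⟩ := Submodule.mem_sup.1 (hK.sup_eq_top ▸ Submodule.mem_top (x := u))
  have hexp : pencilCoeff A (k + w) (k + w) =
      pencilCoeff A k (k + w) + (pencilCoeff A k w + pencilCoeff A w w) := by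
    rw [pencilCoeff_comm hsymm k w]
    ext
    simp only [pencilCoeff, mulVec_add, dotProduct_add, add_dotProduct, Pi.add_apply]
    ring
  have hw0 : 0 ≤ -f (pencilCoeff A w w) := by
    rcases eq_or_ne w 0 with rfl | hne
    · have : pencilCoeff A 0 0 = 0 := by ext; simp [pencilCoeff]
      simp [this]
    · have hnorm : 0 < ‖w‖ := norm_pos_iff.2 hne
      have hmem : q (‖w‖⁻¹ • w) ∈ Γ := Set.mem_insert_of_mem _
        ⟨_, ⟨by simp [norm_smul, hnorm.ne'], K.smul_mem _ hw⟩, rfl⟩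
      have hscale : pencilCoeff A w w = ‖w‖ ^ 2 • q (‖w‖⁻¹ • w) := by
        ext
        simp only [q, pencilCoeff, mulVec_smul, dotProduct_smul, smul_dotProduct, Pi.smul_apply,
          smul_eq_mul]
        field_simp
      rw [hscale, map_smul, smul_eq_mul, ← mul_neg]
      exact mul_nonneg (sq_nonneg _) (hpos _ hmem).le
  simpa [hexp, hV _ (hk (k + w)), hV _ (hk w)] using hw0

theorem specSet_eq_empty_of_neg_one_mem (h : memQM A (-1)) : specSet A = ∅ := by
  refine Set.eq_empty_of_forall_notMem fun x hx => ?_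
  obtain ⟨k, r, q, v, heq⟩ := h
  have heval := congrArg (eval x) heq
  simp only [map_neg, map_one, map_add, map_sum, map_pow, eval_vLv] at heval
  have hsq : 0 ≤ ∑ i, eval x (q i) ^ 2 := Finset.sum_nonneg fun i _ => sq_nonneg _
  have hform : 0 ≤ ∑ j, (fun a => eval x (v j a)) ⬝ᵥ
      (pencilEval A x *ᵥ fun a => eval x (v j a)) :=
    Finset.sum_nonneg fun j _ => by
      simpa using PosSemidef.dotProduct_mulVec_nonneg hx fun a => eval x (v j a)
  linarith

end Pencil

/-- **Theorem (infeasibility certificate).** For a linear pencil `L`, the spectrahedron `S_L`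
is empty if and only if `-1 ∈ M_L`. -/
theorem spectrahedron_empty_iff_neg_one_mem_quadraticModule
    (n m : ℕ) (A : Fin (n+1) → Matrix (Fin m) (Fin m) ℝ)
    (hsymm : ∀ i, (A i).IsSymm) :
    specSet A = ∅ ↔ memQM A (-1) := by
  refine ⟨fun hempty => ?_, specSet_eq_empty_of_neg_one_mem⟩
  by_contra h
  exact (specSet_nonempty_of_neg_one_notMem hsymm h).ne_empty hempty
end

section
/- (Bohnenblust's lemma.) For real symmetric m×m matrices A₁,…,Aₙ the following are equivalent: (i) whenever u₁,…,uₘ ∈ ℝᵐ satisfy Σᵢ₌₁ᵐ uᵢᵀ Aⱼ uᵢ = 0 for all j ∈ {1,…,n}, then u₁ = ⋯ = uₘ = 0; (ii) the linear span of A₁,…,Aₙ contains a positive definite matrix. -/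
open Matrix

namespace Bohnenblust

/-- Summing the quadratic form of `M` over the rows of `u` pairs `M` with the Gram matrix `uᵀ u`. -/
lemma sum_dotProduct_mulVec_eq_trace {m : ℕ} (M : Matrix (Fin m) (Fin m) ℝ)
    (u : Matrix (Fin m) (Fin m) ℝ) :
    ∑ i, u i ⬝ᵥ M *ᵥ u i = (M * (uᵀ * u)).trace := by
  rw [← Matrix.mul_assoc, Matrix.trace_mul_comm]
  simp [Matrix.trace, Matrix.mul_apply, dotProduct, mulVec]

/-- Convex combinations of real Gram matrices are Gram matrices. -/
lemma exists_transpose_mul_self_eq {m : ℕ} (u v : Matrix (Fin m) (Fin m) ℝ) {a b : ℝ}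
    (ha : 0 ≤ a) (hb : 0 ≤ b) :
    ∃ w : Matrix (Fin m) (Fin m) ℝ, wᵀ * w = a • (uᵀ * u) + b • (vᵀ * v) := by
  have hpsd : (a • (uᵀ * u) + b • (vᵀ * v)).PosSemidef := by
    have hu := (posSemidef_conjTranspose_mul_self u).smul ha
    have hv := (posSemidef_conjTranspose_mul_self v).smul hb
    simpa only [conjTranspose_eq_transpose_of_trivial] using hu.add hv
  open scoped MatrixOrder in
  obtain ⟨w, hw⟩ := CStarAlgebra.nonneg_iff_eq_star_mul_self.mp hpsd.nonneg
  exact ⟨w, by rw [hw, star_eq_conjTranspose, conjTranspose_eq_transpose_of_trivial]⟩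

/-- The tuples of vectors normalized so that their squared lengths sum to one. -/
def unitTuples (m : ℕ) : Set (Matrix (Fin m) (Fin m) ℝ) :=
  {u | (uᵀ * u).trace = 1}

lemma trace_transpose_mul_self {m : ℕ} (u : Matrix (Fin m) (Fin m) ℝ) :
    (uᵀ * u).trace = ∑ i, u i ⬝ᵥ u i := by
  simpa using (sum_dotProduct_mulVec_eq_trace 1 u).symm

lemma isCompact_unitTuples (m : ℕ) : IsCompact (unitTuples m) := by
  have hbox : IsCompact (Set.univ.pi fun _ : Fin m => Set.univ.pi fun _ : Fin m =>
      Set.Icc (-1 : ℝ) 1) :=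
    isCompact_univ_pi fun _ => isCompact_univ_pi fun _ => isCompact_Icc
  refine hbox.of_isClosed_subset ?_ ?_
  · have hcont : Continuous fun u : Matrix (Fin m) (Fin m) ℝ => (uᵀ * u).trace := by fun_prop
    exact isClosed_singleton.preimage hcont
  · intro u hu i _ k _
    have hsum : ∑ i, u i ⬝ᵥ u i = 1 := (trace_transpose_mul_self u).symm.trans hu
    have hrow : u i ⬝ᵥ u i ≤ ∑ i, u i ⬝ᵥ u i :=
      Finset.single_le_sum (f := fun i => u i ⬝ᵥ u i)
        (fun i _ => Finset.sum_nonneg fun k _ => mul_self_nonneg (u i k)) (Finset.mem_univ i)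
    have hentry : u i k * u i k ≤ u i ⬝ᵥ u i :=
      Finset.single_le_sum (f := fun k => u i k * u i k)
        (fun k _ => mul_self_nonneg (u i k)) (Finset.mem_univ k)
    exact abs_le.mp (abs_le_one_iff_mul_self_le_one.mpr (by linarith))

/-- The joint values of the quadratic forms `A j`, summed over the rows of `u`. -/
def jointForm {n m : ℕ} (A : Fin n → Matrix (Fin m) (Fin m) ℝ)
    (u : Matrix (Fin m) (Fin m) ℝ) : Fin n → ℝ :=
  fun j => (A j * (uᵀ * u)).trace

lemma isCompact_image_jointForm {n m : ℕ} (A : Fin n → Matrix (Fin m) (Fin m) ℝ) :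
    IsCompact (jointForm A '' unitTuples m) := by
  refine (isCompact_unitTuples m).image ?_
  unfold jointForm
  fun_prop

lemma convex_image_jointForm {n m : ℕ} (A : Fin n → Matrix (Fin m) (Fin m) ℝ) :
    Convex ℝ (jointForm A '' unitTuples m) := by
  rintro _ ⟨u, hu, rfl⟩ _ ⟨v, hv, rfl⟩ a b ha hb hab
  obtain ⟨w, hw⟩ := exists_transpose_mul_self_eq u v ha hb
  refine ⟨w, ?_, ?_⟩
  · simp only [unitTuples, Set.mem_ofPred_eq] at hu hv ⊢
    simp [hw, hu, hv, hab]
  · ext j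
    simp [jointForm, hw, Matrix.mul_add]

lemma sum_mul_jointForm {n m : ℕ} (A : Fin n → Matrix (Fin m) (Fin m) ℝ) (c : Fin n → ℝ)
    (u : Matrix (Fin m) (Fin m) ℝ) :
    ∑ j, c j * jointForm A u j = ∑ i, u i ⬝ᵥ (∑ j, c j • A j) *ᵥ u i := by
  rw [sum_dotProduct_mulVec_eq_trace]
  simp [jointForm, Finset.sum_mul, Matrix.trace_sum]

/-- If the joint form does not vanish on normalized tuples, some linear combination of its
components is positive there. -/
lemma exists_forall_sum_mul_jointForm_pos {n m : ℕ} (A : Fin n → Matrix (Fin m) (Fin m) ℝ)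
    (h : 0 ∉ jointForm A '' unitTuples m) :
    ∃ c : Fin n → ℝ, ∀ u ∈ unitTuples m, 0 < ∑ j, c j * jointForm A u j := by
  obtain ⟨f, r, hr, hf⟩ := geometric_hahn_banach_point_closed (convex_image_jointForm A)
    (isCompact_image_jointForm A).isClosed h
  refine ⟨fun j => f (Pi.single j 1), fun u hu => ?_⟩
  have hpos : 0 < f (jointForm A u) := (map_zero f ▸ hr).trans (hf _ ⟨u, hu, rfl⟩)
  rw [← Finset.univ_sum_single (jointForm A u), map_sum] at hpos
  refine hpos.trans_eq (Finset.sum_congr rfl fun j _ => ?_)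
  rw [mul_comm, ← smul_eq_mul, ← map_smul, ← Pi.single_smul, smul_eq_mul, mul_one]

/-- A quadratic form that is positive on normalized tuples is positive on nonzero vectors. -/
lemma dotProduct_mulVec_pos_of_unitTuples {m : ℕ} {M : Matrix (Fin m) (Fin m) ℝ}
    (h : ∀ u ∈ unitTuples m, 0 < ∑ i, u i ⬝ᵥ M *ᵥ u i) {x : Fin m → ℝ} (hx : x ≠ 0) :
    0 < x ⬝ᵥ M *ᵥ x := by
  obtain ⟨k, -⟩ := Function.ne_iff.mp hx
  have hxx : 0 < x ⬝ᵥ x := by simpa using dotProduct_star_self_pos_iff.mpr hx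
  set s := (√(x ⬝ᵥ x))⁻¹ with hs
  have hss : s * s = (x ⬝ᵥ x)⁻¹ := by
    rw [hs, ← mul_inv, Real.mul_self_sqrt hxx.le]
  have hsum (N : Matrix (Fin m) (Fin m) ℝ) :
      ∑ i, (Pi.single k (s • x) : Fin m → Fin m → ℝ) i ⬝ᵥ
        N *ᵥ (Pi.single k (s • x) : Fin m → Fin m → ℝ) i = (x ⬝ᵥ x)⁻¹ * (x ⬝ᵥ N *ᵥ x) := by
    rw [Finset.sum_eq_single k (fun i _ hi => by simp [Pi.single_eq_of_ne hi]) (by simp)]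
    simp [mulVec_smul, ← mul_assoc, hss]
  have hmem : (Pi.single k (s • x) : Fin m → Fin m → ℝ) ∈ unitTuples m := by
    refine (trace_transpose_mul_self _).trans ?_
    simpa [hxx.ne'] using hsum 1
  have hpos := h _ hmem
  rw [hsum M] at hpos
  exact pos_of_mul_pos_right hpos (inv_nonneg.mpr hxx.le)

end Bohnenblust

open Bohnenblust in
/-- **Bohnenblust's lemma.** For real symmetric `m × m` matrices `A₁, …, Aₙ`, the following
are equivalent: (i) whenever `u₁, …, uₘ ∈ ℝᵐ` satisfy `Σᵢ uᵢᵀ Aⱼ uᵢ = 0` for all `j`, then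
all `uᵢ = 0`; (ii) the span of `A₁, …, Aₙ` contains a positive definite matrix. -/
theorem bohnenblust (n m : ℕ) (A : Fin n → Matrix (Fin m) (Fin m) ℝ)
    (hsymm : ∀ j, (A j).IsSymm) :
    (∀ u : Fin m → (Fin m → ℝ),
        (∀ j, ∑ i, u i ⬝ᵥ (A j).mulVec (u i) = 0) → ∀ i, u i = 0)
    ↔ (∃ c : Fin n → ℝ, (∑ j, c j • A j).PosDef) := by
  constructor
  · intro h
    have hzero : 0 ∉ jointForm A '' unitTuples m := by
      rintro ⟨u, hu, hAu⟩
      have hu0 : u = 0 := funext <| h u fun j =>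
        (sum_dotProduct_mulVec_eq_trace (A j) u).trans (congrFun hAu j)
      simp [unitTuples, hu0] at hu
    obtain ⟨c, hc⟩ := exists_forall_sum_mul_jointForm_pos A hzero
    refine ⟨c, PosDef.of_dotProduct_mulVec_pos ?_ fun x hx => ?_⟩
    · rw [IsHermitian, conjTranspose_eq_transpose_of_trivial, transpose_sum]
      exact Finset.sum_congr rfl fun j _ => by rw [transpose_smul, hsymm j]
    · simpa using dotProduct_mulVec_pos_of_unitTuples
        (fun u hu => sum_mul_jointForm A c u ▸ hc u hu) hx
  · rintro ⟨c, hc⟩ u hu i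
    have hsum : ∑ i, u i ⬝ᵥ (∑ j, c j • A j) *ᵥ u i = 0 := by
      rw [← sum_mul_jointForm A c u]
      refine Finset.sum_eq_zero fun j _ => ?_
      rw [show jointForm A u j = 0 from (sum_dotProduct_mulVec_eq_trace (A j) u).symm.trans (hu j),
        mul_zero]
    have hnonneg (i : Fin m) : 0 ≤ u i ⬝ᵥ (∑ j, c j • A j) *ᵥ u i := by
      simpa using hc.posSemidef.dotProduct_mulVec_nonneg (u i)
    have hi := (Finset.sum_eq_zero_iff_of_nonneg fun i _ => hnonneg i).mp hsum i
      (Finset.mem_univ i)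
    by_contra hne
    exact (hc.dotProduct_mulVec_pos hne).ne' (by simpa using hi)
end

section
/- Let L be a linear pencil of size m which is either weakly infeasible or weakly feasible. Then there exist k ≥ 1 and nonzero vectors u₁,…,u_k ∈ ℝᵐ such that Σᵢ₌₁ᵏ uᵢᵀ L uᵢ = 0 (as a polynomial identity in ℝ[X₁,…,Xₙ]). -/
open MvPolynomial Matrix

/-- The Frobenius distance between two real matrices. (All norms on the finite-dimensional
space of symmetric matrices are equivalent, so positivity of the distance between two sets
does not depend on the choice of norm.) -/
noncomputable def frobDist {m : ℕ} (M N : Matrix (Fin m) (Fin m) ℝ) : ℝ :=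
  Real.sqrt (∑ a, ∑ b, (M a b - N a b)^2)

/-- A linear pencil `L` is strongly infeasible if the distance between the affine set
`{L(x) ∣ x ∈ ℝⁿ}` and the cone of positive semidefinite matrices is strictly positive. -/
def stronglyInfeasible {n m : ℕ} (A : Fin (n+1) → Matrix (Fin m) (Fin m) ℝ) : Prop :=
  ∃ ε > (0:ℝ), ∀ (x : Fin n → ℝ) (B : Matrix (Fin m) (Fin m) ℝ), B.PosSemidef →
    ε ≤ frobDist (pencilEval A x) B

/-- A linear pencil is weakly infeasible if it is infeasible but not strongly infeasible. -/
def weaklyInfeasible {n m : ℕ} (A : Fin (n+1) → Matrix (Fin m) (Fin m) ℝ) : Prop :=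
  specSet A = ∅ ∧ ¬ stronglyInfeasible A

/-- A linear pencil is weakly feasible if `S_L ≠ ∅` but there is no `x` with `L(x) ≻ 0`. -/
def weaklyFeasible {n m : ℕ} (A : Fin (n+1) → Matrix (Fin m) (Fin m) ℝ) : Prop :=
  (specSet A).Nonempty ∧ ¬ ∃ x : Fin n → ℝ, (pencilEval A x).PosDef

/-- `uᵀ L u` as a polynomial, for a constant vector `u ∈ ℝᵐ`. -/
noncomputable def uLu {n m : ℕ} (A : Fin (n+1) → Matrix (Fin m) (Fin m) ℝ)
    (u : Fin m → ℝ) : MvPolynomial (Fin n) ℝ :=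
  ∑ a : Fin m, ∑ b : Fin m,
    MvPolynomial.C (u a) * pencilPoly A a b * MvPolynomial.C (u b)

theorem uLu_eq {n m : ℕ} (A : Fin (n+1) → Matrix (Fin m) (Fin m) ℝ) (u : Fin m → ℝ) :
    uLu A u = C (u ⬝ᵥ A 0 *ᵥ u) + ∑ i : Fin n, X i * C (u ⬝ᵥ A i.succ *ᵥ u) := by
  simp only [uLu, pencilPoly, dotProduct, mulVec, map_sum, map_mul, Finset.mul_sum, mul_add,
    add_mul, Finset.sum_add_distrib, Finset.sum_mul]
  congr 1
  · exact Finset.sum_congr rfl fun a _ => Finset.sum_congr rfl fun b _ => by ring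
  · rw [Finset.sum_comm_cycle]
    exact Finset.sum_congr rfl fun i _ => Finset.sum_congr rfl fun a _ =>
      Finset.sum_congr rfl fun b _ => by ring

theorem dotProduct_pencilEval_mulVec {n m : ℕ} (A : Fin (n+1) → Matrix (Fin m) (Fin m) ℝ)
    (x : Fin n → ℝ) (u : Fin m → ℝ) :
    u ⬝ᵥ pencilEval A x *ᵥ u = u ⬝ᵥ A 0 *ᵥ u + ∑ i, x i * (u ⬝ᵥ A i.succ *ᵥ u) := by
  simp [pencilEval, add_mulVec, sum_mulVec, smul_mulVec, dotProduct_sum]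

theorem isHermitian_pencilEval {n m : ℕ} {A : Fin (n+1) → Matrix (Fin m) (Fin m) ℝ}
    (hsymm : ∀ i, (A i).IsSymm) (x : Fin n → ℝ) : (pencilEval A x).IsHermitian := by
  simp [Matrix.IsHermitian, pencilEval, conjTranspose_eq_transpose_of_trivial, transpose_sum,
    (hsymm _).eq]

theorem dotProduct_sub_mulVec_le_frobDist {m : ℕ} (M B : Matrix (Fin m) (Fin m) ℝ)
    {u : Fin m → ℝ} (hu : u ⬝ᵥ u = 1) : u ⬝ᵥ B *ᵥ u - u ⬝ᵥ M *ᵥ u ≤ frobDist M B := by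
  have hcs := Real.sum_mul_le_sqrt_mul_sqrt Finset.univ
    (fun p : Fin m × Fin m => M p.1 p.2 - B p.1 p.2) (fun p => -(u p.1 * u p.2))
  have hone : ∑ p : Fin m × Fin m, (-(u p.1 * u p.2)) ^ 2 = 1 := by
    have hprod : (u ⬝ᵥ u) * (u ⬝ᵥ u) = 1 := by rw [hu, one_mul]
    rw [← hprod, dotProduct, Finset.sum_mul_sum, Fintype.sum_prod_type]
    exact Finset.sum_congr rfl fun a _ => Finset.sum_congr rfl fun b _ => by ring
  rw [hone, Real.sqrt_one, mul_one, Fintype.sum_prod_type, Fintype.sum_prod_type] at hcs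
  refine le_trans (le_of_eq ?_) hcs
  simp only [dotProduct, mulVec, Finset.mul_sum, ← Finset.sum_sub_distrib]
  exact Finset.sum_congr rfl fun a _ => Finset.sum_congr rfl fun b _ => by ring

theorem posDef_of_forall_unit {m : ℕ} {M : Matrix (Fin m) (Fin m) ℝ} (hM : M.IsHermitian)
    (hpos : ∀ u : Fin m → ℝ, u ⬝ᵥ u = 1 → 0 < u ⬝ᵥ M *ᵥ u) : M.PosDef := by
  refine .of_dotProduct_mulVec_pos hM fun v hv => ?_
  have hvv : 0 < v ⬝ᵥ v := by simpa using dotProduct_star_self_pos_iff.mpr hv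
  have hunit := hpos ((√(v ⬝ᵥ v))⁻¹ • v) (by
    rw [smul_dotProduct, dotProduct_smul, smul_smul, ← mul_inv, Real.mul_self_sqrt hvv.le,
      smul_eq_mul, inv_mul_cancel₀ hvv.ne'])
  rw [mulVec_smul, smul_dotProduct, dotProduct_smul, smul_smul, ← mul_inv,
    Real.mul_self_sqrt hvv.le, smul_eq_mul] at hunit
  simpa using pos_of_mul_pos_right hunit (inv_pos.mpr hvv).le

theorem trace_transpose_mul_self_eq_sum {m : ℕ} (B : Matrix (Fin m) (Fin m) ℝ) :
    (Bᵀ * B).trace = ∑ i, ∑ j, B j i ^ 2 := by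
  simp [trace, mul_apply, sq]

theorem trace_mul_transpose_mul_self {m : ℕ} (M B : Matrix (Fin m) (Fin m) ℝ) :
    (M * (Bᵀ * B)).trace = ∑ i, B i ⬝ᵥ M *ᵥ B i := by
  rw [← Matrix.mul_assoc, trace_mul_comm]
  simp only [trace, diag_apply, mul_apply, dotProduct, mulVec, transpose_apply]

theorem trace_mul_vecMulVec_self {m : ℕ} (M : Matrix (Fin m) (Fin m) ℝ) (u : Fin m → ℝ) :
    (M * vecMulVec u u).trace = u ⬝ᵥ M *ᵥ u := by
  rw [mul_vecMulVec, trace_vecMulVec, dotProduct_comm]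

/-- The set of density matrices: positive semidefinite matrices of trace one. -/
def densityMatrices (m : ℕ) : Set (Matrix (Fin m) (Fin m) ℝ) :=
  {Z | Z.PosSemidef ∧ Z.trace = 1}

open scoped MatrixOrder Matrix.Norms.L2Operator in
theorem exists_eq_transpose_mul_self {m : ℕ} {Z : Matrix (Fin m) (Fin m) ℝ}
    (hZ : Z.PosSemidef) : ∃ B : Matrix (Fin m) (Fin m) ℝ, Z = Bᵀ * B := by
  obtain ⟨B, hB⟩ := CStarAlgebra.nonneg_iff_eq_star_mul_self.mp hZ.nonneg
  exact ⟨B, by rw [hB, star_eq_conjTranspose, conjTranspose_eq_transpose_of_trivial]⟩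

theorem posSemidef_transpose_mul_self_real {m : ℕ} (B : Matrix (Fin m) (Fin m) ℝ) :
    (Bᵀ * B).PosSemidef := by
  simpa [conjTranspose_eq_transpose_of_trivial] using posSemidef_conjTranspose_mul_self B

theorem isCompact_densityMatrices (m : ℕ) : IsCompact (densityMatrices m) := by
  have himage : densityMatrices m =
      (fun B : Matrix (Fin m) (Fin m) ℝ => Bᵀ * B) '' {B | (Bᵀ * B).trace = 1} := by
    ext Z
    constructor
    · rintro ⟨hZ, htr⟩
      obtain ⟨B, rfl⟩ := exists_eq_transpose_mul_self hZ
      exact ⟨B, htr, rfl⟩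
    · rintro ⟨B, hB, rfl⟩
      exact ⟨posSemidef_transpose_mul_self_real B, hB⟩
  rw [himage]
  refine IsCompact.image ?_ (by fun_prop)
  refine IsCompact.of_isClosed_subset (isCompact_univ_pi fun _ : Fin m =>
    isCompact_univ_pi fun _ : Fin m => isCompact_Icc (a := (-1 : ℝ)) (b := 1))
    (isClosed_eq (by fun_prop) continuous_const) ?_
  intro B hB j _ i _
  rw [Set.mem_ofPred_eq, trace_transpose_mul_self_eq_sum] at hB
  have hle : B j i ^ 2 ≤ 1 := hB ▸
    (Finset.single_le_sum (f := fun j => B j i ^ 2) (fun _ _ => sq_nonneg _)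
      (Finset.mem_univ j)).trans
    (Finset.single_le_sum (f := fun i => ∑ j, B j i ^ 2)
      (fun _ _ => Finset.sum_nonneg fun _ _ => sq_nonneg _) (Finset.mem_univ i))
  exact abs_le.mp (sq_le_one_iff_abs_le_one _ |>.mp hle)

theorem convex_densityMatrices (m : ℕ) : Convex ℝ (densityMatrices m) := by
  rintro Z ⟨hZ, hZtr⟩ W ⟨hW, hWtr⟩ a b ha hb hab
  exact ⟨(hZ.smul ha).add (hW.smul hb), by simp [hZtr, hWtr, hab]⟩

theorem vecMulVec_self_mem_densityMatrices {m : ℕ} {u : Fin m → ℝ} (hu : u ⬝ᵥ u = 1) :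
    vecMulVec u u ∈ densityMatrices m :=
  ⟨by simpa using posSemidef_vecMulVec_self_star u, by rw [trace_vecMulVec, hu]⟩

/-- Theorem of the alternative: either some density matrix is orthogonal to all the given
matrices, or some linear combination of them is uniformly positive on unit vectors. -/
theorem exists_density_orthogonal_or_exists_combination_pos {N m : ℕ}
    (A : Fin N → Matrix (Fin m) (Fin m) ℝ) :
    (∃ Z ∈ densityMatrices m, ∀ j, (A j * Z).trace = 0) ∨
      ∃ (y : Fin N → ℝ) (δ : ℝ), 0 < δ ∧
        ∀ u : Fin m → ℝ, u ⬝ᵥ u = 1 → δ < ∑ j, y j * (u ⬝ᵥ A j *ᵥ u) := by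
  let φ : Matrix (Fin m) (Fin m) ℝ →ₗ[ℝ] (Fin N → ℝ) :=
    LinearMap.pi fun j => traceLinearMap (Fin m) ℝ ℝ ∘ₗ LinearMap.mulLeft ℝ (A j)
  have hφ : ∀ Z j, φ Z j = (A j * Z).trace := fun _ _ => rfl
  have hcont : Continuous φ := continuous_pi fun j => by
    simp only [hφ]
    fun_prop
  by_cases hzero : (0 : Fin N → ℝ) ∈ φ '' densityMatrices m
  · obtain ⟨Z, hZ, hZ0⟩ := hzero
    exact Or.inl ⟨Z, hZ, fun j => by rw [← hφ, hZ0, Pi.zero_apply]⟩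
  · right
    obtain ⟨f, δ, hδ, hf⟩ := geometric_hahn_banach_point_closed
      ((convex_densityMatrices m).linear_image φ)
      ((isCompact_densityMatrices m).image hcont).isClosed hzero
    refine ⟨fun j => f fun i => if j = i then 1 else 0, δ, by simpa using hδ, fun u hu => ?_⟩
    have hlt := hf _ ⟨_, vecMulVec_self_mem_densityMatrices hu, rfl⟩
    rw [← ContinuousLinearMap.coe_coe, LinearMap.pi_apply_eq_sum_univ] at hlt
    simpa only [hφ, trace_mul_vecMulVec_self, smul_eq_mul, mul_comm,
      ContinuousLinearMap.coe_coe] using hlt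

theorem exists_pencilEval_ge_neg {n m : ℕ} {A : Fin (n+1) → Matrix (Fin m) (Fin m) ℝ}
    (h : weaklyInfeasible A ∨ weaklyFeasible A) {ε : ℝ} (hε : 0 < ε) :
    ∃ x, ∀ u : Fin m → ℝ, u ⬝ᵥ u = 1 → -ε ≤ u ⬝ᵥ pencilEval A x *ᵥ u := by
  rcases h with ⟨_, hns⟩ | ⟨⟨x, hx⟩, _⟩
  · unfold stronglyInfeasible at hns
    push Not at hns
    obtain ⟨x, B, hB, hdist⟩ := hns ε hε
    refine ⟨x, fun u hu => ?_⟩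
    have hle := dotProduct_sub_mulVec_le_frobDist (pencilEval A x) B hu
    have hnonneg : 0 ≤ u ⬝ᵥ B *ᵥ u := by simpa using hB.dotProduct_mulVec_nonneg u
    linarith
  · refine ⟨x, fun u _ => ?_⟩
    have hnonneg : 0 ≤ u ⬝ᵥ pencilEval A x *ᵥ u := by
      simpa using PosSemidef.dotProduct_mulVec_nonneg hx u
    linarith

theorem not_posDef_pencilEval {n m : ℕ} {A : Fin (n+1) → Matrix (Fin m) (Fin m) ℝ}
    (h : weaklyInfeasible A ∨ weaklyFeasible A) (x : Fin n → ℝ) :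
    ¬ (pencilEval A x).PosDef := by
  intro hx
  rcases h with ⟨hempty, _⟩ | ⟨_, hnot⟩
  · exact Set.eq_empty_iff_forall_notMem.mp hempty x hx.posSemidef
  · exact hnot ⟨x, hx⟩

theorem exists_density_orthogonal_pencil {n m : ℕ} {A : Fin (n+1) → Matrix (Fin m) (Fin m) ℝ}
    (hsymm : ∀ i, (A i).IsSymm) (h : weaklyInfeasible A ∨ weaklyFeasible A) :
    ∃ Z ∈ densityMatrices m, ∀ j, (A j * Z).trace = 0 := by
  refine (exists_density_orthogonal_or_exists_combination_pos A).resolve_right ?_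
  rintro ⟨y, δ, hδ, hy⟩
  have hs : 0 < 1 + |y 0| := by positivity
  have hys : 0 < y 0 + (1 + |y 0|) := by linarith [neg_abs_le (y 0)]
  set s := 1 + |y 0|
  obtain ⟨x, hx⟩ := exists_pencilEval_ge_neg h (div_pos hδ hs)
  refine not_posDef_pencilEval h (fun i => (y i.succ + s * x i) / (y 0 + s))
    (posDef_of_forall_unit (isHermitian_pencilEval hsymm _) fun u hu => ?_)
  have hyu := hy u hu
  have hxu := mul_le_mul_of_nonneg_left (hx u hu) hs.le
  rw [mul_neg, mul_div_cancel₀ _ hs.ne'] at hxu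
  rw [Fin.sum_univ_succ] at hyu
  refine pos_of_mul_pos_right (a := y 0 + s) ?_ hys.le
  have hexpand : (y 0 + s) * (u ⬝ᵥ pencilEval A
        (fun i => (y i.succ + s * x i) / (y 0 + s)) *ᵥ u) =
      (y 0 * (u ⬝ᵥ A 0 *ᵥ u) + ∑ i : Fin n, y i.succ * (u ⬝ᵥ A i.succ *ᵥ u)) +
        s * (u ⬝ᵥ pencilEval A x *ᵥ u) := by
    have hterm : ∀ i : Fin n, (y 0 + s) * ((y i.succ + s * x i) / (y 0 + s) *
        (u ⬝ᵥ A i.succ *ᵥ u)) =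
          y i.succ * (u ⬝ᵥ A i.succ *ᵥ u) + s * (x i * (u ⬝ᵥ A i.succ *ᵥ u)) := fun i => by
      field_simp
    simp only [dotProduct_pencilEval_mulVec, mul_add, Finset.mul_sum, hterm,
      Finset.sum_add_distrib]
    ring
  rw [hexpand]
  linarith

/-- **Lemma.** If a linear pencil `L` of size `m` is weakly infeasible or weakly feasible,
then there exist `k ≥ 1` and nonzero vectors `u₁, …, u_k ∈ ℝᵐ` with `Σᵢ uᵢᵀ L uᵢ = 0`
as a polynomial identity. -/
theorem exists_nonzero_vectors_sum_uLu_eq_zero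
    (n m : ℕ) (A : Fin (n+1) → Matrix (Fin m) (Fin m) ℝ)
    (hsymm : ∀ i, (A i).IsSymm)
    (h : weaklyInfeasible A ∨ weaklyFeasible A) :
    ∃ (k : ℕ), 1 ≤ k ∧ ∃ u : Fin k → Fin m → ℝ,
      (∀ i, u i ≠ 0) ∧ ∑ i, uLu A (u i) = 0 := by
  obtain ⟨Z, ⟨hZ, htr⟩, horth⟩ := exists_density_orthogonal_pencil hsymm h
  obtain ⟨B, rfl⟩ := exists_eq_transpose_mul_self hZ
  simp only [trace_mul_transpose_mul_self] at horth
  have hsum : ∑ i, uLu A (B i) = 0 := by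
    simp only [uLu_eq, Finset.sum_add_distrib]
    rw [Finset.sum_comm]
    simp only [← Finset.mul_sum, ← map_sum, horth, map_zero, mul_zero, Finset.sum_const_zero,
      add_zero]
  classical
  let e := Fintype.equivFin {i // B i ≠ 0}
  refine ⟨Fintype.card {i // B i ≠ 0}, ?_, fun i => B (e.symm i), fun i => (e.symm i).2, ?_⟩
  · rw [Nat.one_le_iff_ne_zero, Ne, Fintype.card_eq_zero_iff]
    intro hempty
    have hB : B = 0 := funext fun i => by_contra fun hi => hempty.false ⟨i, hi⟩
    simp [hB] at htr
  · rw [e.symm.sum_comp fun i : {i // B i ≠ 0} => uLu A (B i), ← hsum,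
      ← Finset.sum_subtype (Finset.univ.filter fun i => B i ≠ 0) (by simp) fun i => uLu A (B i)]
    refine Finset.sum_filter_of_ne fun i _ hi hBi => hi ?_
    simp [hBi, uLu]
end
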